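/- (Remark 3: sandwich property of nodal flow dynamics.) Suppose each dissipation function f_{ij}(t,u,v) is differentiable and strictly increasing in its last argument, i.e. ∂f_{ij}/∂v(t,u,v) > 0 for all (t,u,v), and suppose the right-hand side g(t,·,q(t)) is Lipschitz in ρ so that solutions are unique. Let q¹, q, q² : [0,T] → ℝ^V be continuous injection vectors and ρ¹, ρ, ρ² : [0,T] → ℝ^V the corresponding solutions of the nodal network flow dynamics (with the same compression ratio functions ᾱ_{ij}, α̲_{ij}). If ρ¹(0) ≤ ρ(0) ≤ ρ²(0) componentwise and q¹(s) ≤ q(s) ≤ q²(s) componentwise for all s ∈ [0,t], then ρ¹(t) ≤ ρ(t) ≤ ρ²(t) componentwise. -/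

import Mathlib

/-!
The field of the nodal dynamics is quasimonotone: raising the densities at all nodes but `j` can
only raise the rate of change at `j`, because each dissipation function is monotone in the density
gradient. If such a field is Lipschitz, the order of two solutions is preserved: after raising the
upper one by the barrier `ε * exp ((K + 1) * (s - a))`, at a first contact in a component `i` the
`i`-th derivative of the lower solution would be strictly smaller, so no crossing occurs; then
let `ε → 0`.
-/

open Set Filter Topology

section Comparison

variable {ι : Type*} {a b : ℝ}

theorem eventually_lt_nhdsGT_of_deriv_right_lt {u v : ℝ → ℝ} {u' v' s : ℝ}
    (hu : HasDerivWithinAt u u' (Ici s) s) (hv : HasDerivWithinAt v v' (Ici s) s)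
    (hcontact : u s = v s) (hderiv : u' < v') : ∀ᶠ z in 𝓝[>] s, u z < v z := by
  have hslope : ∀ᶠ z in 𝓝[>] s, slope (u - v) s z < 0 :=
    (hu.sub hv).Ioi_of_Ici.limsup_slope_le' self_notMem_Ioi (sub_neg.2 hderiv)
  filter_upwards [hslope, self_mem_nhdsWithin] with z hz hsz
  rw [slope_def_field, Pi.sub_apply, Pi.sub_apply, hcontact, sub_self, sub_zero,
    div_lt_iff₀ (sub_pos.2 hsz), zero_mul] at hz
  exact sub_neg.1 hz

theorem le_on_Icc_of_deriv_right_lt_of_contact [Finite ι] {u v u' v' : ℝ → ι → ℝ}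
    (hu : ContinuousOn u (Icc a b)) (hv : ContinuousOn v (Icc a b))
    (hu' : ∀ s ∈ Ico a b, HasDerivWithinAt u (u' s) (Ici s) s)
    (hv' : ∀ s ∈ Ico a b, HasDerivWithinAt v (v' s) (Ici s) s)
    (hcontact : ∀ s ∈ Ico a b, u s ≤ v s → ∀ i, u s i = v s i → u' s i < v' s i)
    (ha : u a ≤ v a) : ∀ s ∈ Icc a b, u s ≤ v s := by
  cases nonempty_fintype ι
  refine IsClosed.Icc_subset_of_forall_mem_nhdsWithin (s := {s | u s ≤ v s}) ?_ ha ?_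
  · rw [inter_comm]
    exact isClosed_Icc.isClosed_le hu hv
  rintro s ⟨hle, hs⟩
  suffices h : ∀ i, ∀ᶠ z in 𝓝[>] s, u z i ≤ v z i from eventually_all.2 h
  intro i
  have hui := hasDerivWithinAt_pi.1 (hu' s hs) i
  have hvi := hasDerivWithinAt_pi.1 (hv' s hs) i
  rcases (hle i).eq_or_lt with heq | hlt
  · exact (eventually_lt_nhdsGT_of_deriv_right_lt hui hvi heq (hcontact s hs hle i heq)).mono
      fun _ => le_of_lt
  · exact (hui.Ioi_of_Ici.continuousWithinAt.eventually_lt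
      hvi.Ioi_of_Ici.continuousWithinAt hlt).mono fun _ => le_of_lt

theorem le_on_Icc_of_deriv_right_le_of_shifted_contact [Finite ι] {u v u' v' : ℝ → ι → ℝ} (K : ℝ)
    (hu : ContinuousOn u (Icc a b)) (hv : ContinuousOn v (Icc a b))
    (hu' : ∀ s ∈ Ico a b, HasDerivWithinAt u (u' s) (Ici s) s)
    (hv' : ∀ s ∈ Ico a b, HasDerivWithinAt v (v' s) (Ici s) s)
    (hcontact : ∀ s ∈ Ico a b, ∀ δ > 0, (∀ j, u s j ≤ v s j + δ) →
      ∀ i, u s i = v s i + δ → u' s i ≤ v' s i + K * δ)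
    (ha : u a ≤ v a) : ∀ s ∈ Icc a b, u s ≤ v s := by
  cases nonempty_fintype ι
  have hbarrier : ∀ ε > 0, ∀ s ∈ Icc a b, ∀ i,
      u s i ≤ v s i + ε * Real.exp ((K + 1) * (s - a)) := by
    intro ε hε
    set δ : ℝ → ℝ := fun s => ε * Real.exp ((K + 1) * (s - a))
    have hδ_pos (s : ℝ) : 0 < δ s := mul_pos hε (Real.exp_pos _)
    have hδ_deriv (s : ℝ) : HasDerivAt δ ((K + 1) * δ s) s := by
      refine ((((hasDerivAt_id s).sub_const a).const_mul (K + 1)).exp.const_mul ε).congr_deriv ?_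
      simp only [δ, id]
      ring
    have hδ_cont : Continuous δ := continuous_iff_continuousAt.2 fun s => (hδ_deriv s).continuousAt
    refine le_on_Icc_of_deriv_right_lt_of_contact (v := fun s i => v s i + δ s)
      (v' := fun s i => v' s i + (K + 1) * δ s) hu ?_ hu' ?_ ?_ ?_
    · exact continuousOn_pi.2 fun i => (continuousOn_pi.1 hv i).add hδ_cont.continuousOn
    · exact fun s hs => hasDerivWithinAt_pi.2 fun i =>
        (hasDerivWithinAt_pi.1 (hv' s hs) i).add (hδ_deriv s).hasDerivWithinAt
    · intro s hs hle i heq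
      linarith [hcontact s hs (δ s) (hδ_pos s) hle i heq, hδ_pos s]
    · exact fun i => (ha i).trans (le_add_of_nonneg_right (hδ_pos a).le)
  intro s hs i
  refine le_of_forall_pos_le_add fun η hη => ?_
  have := hbarrier (η / Real.exp ((K + 1) * (s - a))) (by positivity) s hs i
  rwa [div_mul_cancel₀ _ (Real.exp_ne_zero _)] at this

theorem apply_add_const_le_of_lipschitzWith [Fintype ι] {F : (ι → ℝ) → ι → ℝ} {K : NNReal}
    (hF : LipschitzWith K F) (x : ι → ℝ) {δ : ℝ} (hδ : 0 ≤ δ) (i : ι) :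
    F (fun j => x j + δ) i ≤ F x i + K * δ := by
  have hdist : dist (fun j => x j + δ) x ≤ δ :=
    (dist_pi_le_iff hδ).2 fun j => by simp [abs_of_nonneg hδ]
  have : |F (fun j => x j + δ) i - F x i| ≤ K * δ :=
    calc
      _ ≤ dist (F fun j => x j + δ) (F x) := dist_le_pi_dist _ _ i
      _ ≤ K * δ := hF.dist_le_mul_of_le hdist
  linarith [le_of_abs_le this]

/-- The Kamke–Müller condition on a vector field `F`, the hypothesis of the comparison principle
for systems: at points `x ≤ y` that agree in a component `i`, the `i`-th components of `F` are
ordered in the same way. -/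
def IsQuasimonotone (F : (ι → ℝ) → ι → ℝ) : Prop :=
  ∀ ⦃x y : ι → ℝ⦄, x ≤ y → ∀ i, x i = y i → F x i ≤ F y i

theorem subsolution_le_supersolution [Fintype ι] {F : ℝ → (ι → ℝ) → ι → ℝ} {K : NNReal}
    {u v u' v' : ℝ → ι → ℝ}
    (hF : ∀ s ∈ Ico a b, IsQuasimonotone (F s)) (hLip : ∀ s ∈ Ico a b, LipschitzWith K (F s))
    (hu : ContinuousOn u (Icc a b)) (hv : ContinuousOn v (Icc a b))
    (hu' : ∀ s ∈ Ico a b, HasDerivWithinAt u (u' s) (Ici s) s)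
    (hv' : ∀ s ∈ Ico a b, HasDerivWithinAt v (v' s) (Ici s) s)
    (hsub : ∀ s ∈ Ico a b, u' s ≤ F s (u s)) (hsuper : ∀ s ∈ Ico a b, F s (v s) ≤ v' s)
    (ha : u a ≤ v a) : ∀ s ∈ Icc a b, u s ≤ v s := by
  refine le_on_Icc_of_deriv_right_le_of_shifted_contact K hu hv hu' hv' ?_ ha
  intro s hs δ hδ hle i heq
  calc
    u' s i ≤ F s (u s) i := hsub s hs i
    _ ≤ F s (fun j => v s j + δ) i := hF s hs hle i heq
    _ ≤ F s (v s) i + K * δ := apply_add_const_le_of_lipschitzWith (hLip s hs) (v s) hδ.le i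
    _ ≤ v' s i + K * δ := by gcongr; exact hsuper s hs i

theorem hasDerivWithinAt_Ici_of_isIntegralCurveOn_Icc {E : Type*} [NormedAddCommGroup E]
    [NormedSpace ℝ E] {γ : ℝ → E} {v : ℝ → E → E} (h : IsIntegralCurveOn γ v (Icc a b)) {s : ℝ}
    (hs : s ∈ Ico a b) : HasDerivWithinAt γ (v s (γ s)) (Ici s) s :=
  (h s (Ico_subset_Icc_self hs)).mono_of_mem_nhdsWithin (Icc_mem_nhdsGE_of_mem hs)

theorem integralCurve_sandwich [Fintype ι] {F₁ F F₂ : ℝ → (ι → ℝ) → ι → ℝ} {K : NNReal}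
    {x₁ x x₂ : ℝ → ι → ℝ}
    (hF : ∀ s ∈ Icc a b, IsQuasimonotone (F s)) (hLip : ∀ s ∈ Icc a b, LipschitzWith K (F s))
    (hF₁ : ∀ s ∈ Icc a b, F₁ s ≤ F s) (hF₂ : ∀ s ∈ Icc a b, F s ≤ F₂ s)
    (hx₁ : IsIntegralCurveOn x₁ F₁ (Icc a b)) (hx : IsIntegralCurveOn x F (Icc a b))
    (hx₂ : IsIntegralCurveOn x₂ F₂ (Icc a b)) (ha : x₁ a ≤ x a ∧ x a ≤ x₂ a) :
    ∀ s ∈ Icc a b, x₁ s ≤ x s ∧ x s ≤ x₂ s := by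
  have hsub : Ico a b ⊆ Icc a b := Ico_subset_Icc_self
  have hFI : ∀ s ∈ Ico a b, IsQuasimonotone (F s) := fun s hs => hF s (hsub hs)
  have hLipI : ∀ s ∈ Ico a b, LipschitzWith K (F s) := fun s hs => hLip s (hsub hs)
  have lower : ∀ s ∈ Icc a b, x₁ s ≤ x s :=
    subsolution_le_supersolution hFI hLipI hx₁.continuousOn hx.continuousOn
      (fun _ => hasDerivWithinAt_Ici_of_isIntegralCurveOn_Icc hx₁)
      (fun _ => hasDerivWithinAt_Ici_of_isIntegralCurveOn_Icc hx)
      (fun s hs => hF₁ s (hsub hs) (x₁ s)) (fun _ _ => le_rfl) ha.1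
  have upper : ∀ s ∈ Icc a b, x s ≤ x₂ s :=
    subsolution_le_supersolution hFI hLipI hx.continuousOn hx₂.continuousOn
      (fun _ => hasDerivWithinAt_Ici_of_isIntegralCurveOn_Icc hx)
      (fun _ => hasDerivWithinAt_Ici_of_isIntegralCurveOn_Icc hx₂)
      (fun _ _ => le_rfl) (fun s hs => hF₂ s (hsub hs) (x₂ s)) ha.2
  exact fun s hs => ⟨lower s hs, upper s hs⟩

end Comparison

section Network

variable {V : Type*} [Fintype V] [DecidableEq V] {E : Finset (V × V)} {ℓ : ℝ}
  {abar aund : V × V → ℝ → ℝ} {f : V × V → ℝ → ℝ → ℝ → ℝ}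

/-- The aggregated nodal actuation `α_j` of the paper, which scales the rate of change at `j`. -/
def nodalActuation (E : Finset (V × V)) (abar aund : V × V → ℝ → ℝ) (j : V) (t : ℝ) : ℝ :=
  (∑ i with (i, j) ∈ E, abar (i, j) t) + ∑ k with (j, k) ∈ E, aund (j, k) t

/-- The net flow through the edges at `j`: the sum over the edges `(j, k)` minus the sum over the
edges `(i, j)`, which is the part of the nodal dynamics that couples the nodes. -/
noncomputable def netEdgeFlow (E : Finset (V × V)) (ℓ : ℝ) (abar aund : V × V → ℝ → ℝ)
    (f : V × V → ℝ → ℝ → ℝ → ℝ) (t : ℝ) (ρ : V → ℝ) (j : V) : ℝ :=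
  (∑ k with (j, k) ∈ E, f (j, k) t (aund (j, k) t * ρ j)
    ((abar (j, k) t * ρ k - aund (j, k) t * ρ j) / ℓ)) -
  ∑ i with (i, j) ∈ E, f (i, j) t (abar (i, j) t * ρ j)
    ((abar (i, j) t * ρ j - aund (i, j) t * ρ i) / ℓ)

/-- The vector field of the nodal dynamics driven by the injections `q`. The functions
`gain j` and `decay j` stand for the coefficients `2 / (ℓ α_j)` and `α̇_j / α_j` of the paper. -/
noncomputable def nodalField (E : Finset (V × V)) (ℓ : ℝ) (abar aund : V × V → ℝ → ℝ)
    (f : V × V → ℝ → ℝ → ℝ → ℝ) (gain decay : V → ℝ → ℝ) (q : ℝ → V → ℝ)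
    (t : ℝ) (ρ : V → ℝ) (j : V) : ℝ :=
  gain j t * (netEdgeFlow E ℓ abar aund f t ρ j + q t j) - decay j t * ρ j

theorem nodalActuation_nonneg {t : ℝ} (habar : ∀ e ∈ E, 0 ≤ abar e t)
    (haund : ∀ e ∈ E, 0 ≤ aund e t) (j : V) : 0 ≤ nodalActuation E abar aund j t :=
  add_nonneg (Finset.sum_nonneg fun _ hi => habar _ (Finset.mem_filter.1 hi).2)
    (Finset.sum_nonneg fun _ hk => haund _ (Finset.mem_filter.1 hk).2)

theorem isQuasimonotone_netEdgeFlow {t : ℝ} (hℓ : 0 ≤ ℓ)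
    (habar : ∀ e ∈ E, 0 ≤ abar e t) (haund : ∀ e ∈ E, 0 ≤ aund e t)
    (hf : ∀ e ∈ E, ∀ u, Monotone (f e t u)) :
    IsQuasimonotone (netEdgeFlow E ℓ abar aund f t) := by
  intro x y hxy j hj
  unfold netEdgeFlow
  rw [hj]
  refine sub_le_sub (Finset.sum_le_sum fun k hk => ?_) (Finset.sum_le_sum fun i hi => ?_)
  · have he := (Finset.mem_filter.1 hk).2
    apply hf _ he
    gcongr
    exacts [habar _ he, hxy k]
  · have he := (Finset.mem_filter.1 hi).2
    apply hf _ he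
    gcongr
    exacts [haund _ he, hxy i]

theorem isQuasimonotone_nodalField {gain decay : V → ℝ → ℝ} {q : ℝ → V → ℝ} {t : ℝ}
    (hflow : IsQuasimonotone (netEdgeFlow E ℓ abar aund f t)) (hgain : ∀ j, 0 ≤ gain j t) :
    IsQuasimonotone (nodalField E ℓ abar aund f gain decay q t) := by
  intro x y hxy j hj
  unfold nodalField
  rw [hj]
  gcongr
  exacts [hgain j, hflow hxy j hj]

theorem nodalField_mono_injection {gain decay : V → ℝ → ℝ} {p q : ℝ → V → ℝ} {t : ℝ}
    (hgain : ∀ j, 0 ≤ gain j t) (hpq : p t ≤ q t) :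
    nodalField E ℓ abar aund f gain decay p t ≤ nodalField E ℓ abar aund f gain decay q t := by
  intro ρ j
  unfold nodalField
  gcongr
  exacts [hgain j, hpq j]

theorem nodal_dynamics_sandwich_general {T : ℝ} (hℓ : 0 < ℓ)
    (habar : ∀ e ∈ E, ∀ t ∈ Icc 0 T, 0 ≤ abar e t) (haund : ∀ e ∈ E, ∀ t ∈ Icc 0 T, 0 ≤ aund e t)
    (hf : ∀ e ∈ E, ∀ t ∈ Icc 0 T, ∀ u, Monotone (f e t u))
    {gain decay : V → ℝ → ℝ} (hgain : ∀ j, ∀ t ∈ Icc 0 T, 0 ≤ gain j t)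
    {q₁ q q₂ ρ₁ ρ ρ₂ : ℝ → V → ℝ} {K : NNReal}
    (hLip : ∀ t ∈ Icc 0 T, LipschitzWith K (nodalField E ℓ abar aund f gain decay q t))
    (hρ₁ : IsIntegralCurveOn ρ₁ (nodalField E ℓ abar aund f gain decay q₁) (Icc 0 T))
    (hρ : IsIntegralCurveOn ρ (nodalField E ℓ abar aund f gain decay q) (Icc 0 T))
    (hρ₂ : IsIntegralCurveOn ρ₂ (nodalField E ℓ abar aund f gain decay q₂) (Icc 0 T))
    {t : ℝ} (ht : t ∈ Icc 0 T) (h0 : ρ₁ 0 ≤ ρ 0 ∧ ρ 0 ≤ ρ₂ 0)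
    (hq : ∀ s ∈ Icc 0 t, q₁ s ≤ q s ∧ q s ≤ q₂ s) :
    ρ₁ t ≤ ρ t ∧ ρ t ≤ ρ₂ t := by
  have hsub : Icc 0 t ⊆ Icc 0 T := Icc_subset_Icc_right ht.2
  have hflow : ∀ s ∈ Icc 0 T, IsQuasimonotone (netEdgeFlow E ℓ abar aund f s) := fun s hs =>
    isQuasimonotone_netEdgeFlow hℓ.le (fun e he => habar e he s hs) (fun e he => haund e he s hs)
      (fun e he => hf e he s hs)
  have hgain_t : ∀ s ∈ Icc 0 t, ∀ j, 0 ≤ gain j s := fun s hs j => hgain j s (hsub hs)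
  exact integralCurve_sandwich
    (fun s hs => isQuasimonotone_nodalField (hflow s (hsub hs)) (hgain_t s hs))
    (fun s hs => hLip s (hsub hs))
    (fun s hs => nodalField_mono_injection (hgain_t s hs) (hq s hs).1)
    (fun s hs => nodalField_mono_injection (hgain_t s hs) (hq s hs).2)
    (hρ₁.mono hsub) (hρ.mono hsub) (hρ₂.mono hsub) h0 t ⟨ht.1, le_rfl⟩

end Network

/-- Remark 3 (sandwich property): a solution whose initial condition and injections are
sandwiched between those of two other solutions remains sandwiched componentwise. -/
theorem nodal_dynamics_sandwich
    (V : Type*) [Fintype V] [DecidableEq V]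
    (E : Finset (V × V))
    (hE_noloop : ∀ e ∈ E, e.1 ≠ e.2)
    (hE_inc : ∀ j : V, (∃ i, (i, j) ∈ E) ∨ (∃ k, (j, k) ∈ E))
    (ℓ T : ℝ) (hℓ : 0 < ℓ) (hT : 0 < T)
    -- compression ratio functions ᾱ (abar) and α̲ (aund), C¹ and strictly positive on [0,T]
    (abar aund : V × V → ℝ → ℝ)
    (habar : ∀ e ∈ E, ContDiff ℝ 1 (abar e) ∧ ∀ t ∈ Set.Icc (0:ℝ) T, 0 < abar e t)
    (haund : ∀ e ∈ E, ContDiff ℝ 1 (aund e) ∧ ∀ t ∈ Set.Icc (0:ℝ) T, 0 < aund e t)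
    -- differentiable dissipation functions f_{ij}(t,u,v)
    (f : V × V → ℝ → ℝ → ℝ → ℝ)
    (hf : ∀ e ∈ E, Differentiable ℝ (fun z : ℝ × ℝ × ℝ => f e z.1 z.2.1 z.2.2))
    -- aggregated nodal actuation α_j(t)
    (A : V → ℝ → ℝ)
    (hA : ∀ (j : V) (t : ℝ), A j t =
      (∑ i ∈ Finset.univ.filter (fun i : V => (i, j) ∈ E), abar (i, j) t) +
      (∑ k ∈ Finset.univ.filter (fun k : V => (j, k) ∈ E), aund (j, k) t))
    -- the nodal network flow dynamics ρ̇_j = g_j(t, ρ, q)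
    (g : ℝ → (V → ℝ) → (V → ℝ) → V → ℝ)
    (hg : ∀ (t : ℝ) (ρ qv : V → ℝ) (j : V), g t ρ qv j =
      (2 / (ℓ * A j t)) *
        ((∑ k ∈ Finset.univ.filter (fun k : V => (j, k) ∈ E),
            f (j, k) t (aund (j, k) t * ρ j)
              ((abar (j, k) t * ρ k - aund (j, k) t * ρ j) / ℓ)) -
         (∑ i ∈ Finset.univ.filter (fun i : V => (i, j) ∈ E),
            f (i, j) t (abar (i, j) t * ρ j)
              ((abar (i, j) t * ρ j - aund (i, j) t * ρ i) / ℓ)) +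
         qv j) -
      (deriv (A j) t / A j t) * ρ j)
    -- each dissipation function is strictly increasing in its last argument
    (hf_incr : ∀ e ∈ E, ∀ t ∈ Set.Icc (0:ℝ) T, ∀ u v : ℝ,
      0 < deriv (fun w : ℝ => f e t u w) v)
    -- Lipschitz continuity of the right-hand side in ρ (solutions are unique)
    (K : NNReal)
    (hLip : ∀ t ∈ Set.Icc (0:ℝ) T, ∀ qv : V → ℝ, LipschitzWith K (fun ρ => g t ρ qv))
    -- three continuous injection profiles and corresponding solutions
    (q₁ q q₂ : ℝ → V → ℝ) (hq₁ : Continuous q₁) (hqc : Continuous q) (hq₂ : Continuous q₂)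
    (ρ₁ ρ ρ₂ : ℝ → V → ℝ)
    (hρ₁ : ∀ s ∈ Set.Icc (0:ℝ) T, HasDerivAt ρ₁ (g s (ρ₁ s) (q₁ s)) s)
    (hρ : ∀ s ∈ Set.Icc (0:ℝ) T, HasDerivAt ρ (g s (ρ s) (q s)) s)
    (hρ₂ : ∀ s ∈ Set.Icc (0:ℝ) T, HasDerivAt ρ₂ (g s (ρ₂ s) (q₂ s)) s)
    (t : ℝ) (ht : t ∈ Set.Icc (0:ℝ) T)
    (h0 : ρ₁ 0 ≤ ρ 0 ∧ ρ 0 ≤ ρ₂ 0)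
    (hq : ∀ s ∈ Set.Icc 0 t, q₁ s ≤ q s ∧ q s ≤ q₂ s) :
    ρ₁ t ≤ ρ t ∧ ρ t ≤ ρ₂ t := by
  have habar_nonneg : ∀ e ∈ E, ∀ s ∈ Icc 0 T, 0 ≤ abar e s := fun e he s hs =>
    ((habar e he).2 s hs).le
  have haund_nonneg : ∀ e ∈ E, ∀ s ∈ Icc 0 T, 0 ≤ aund e s := fun e he s hs =>
    ((haund e he).2 s hs).le
  have hf_mono : ∀ e ∈ E, ∀ s ∈ Icc 0 T, ∀ u, Monotone (f e s u) := fun e he s hs u =>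
    (strictMono_of_deriv_pos (hf_incr e he s hs u)).monotone
  have hgain (j : V) (s : ℝ) (hs : s ∈ Icc 0 T) : 0 ≤ 2 / (ℓ * A j s) := by
    have hA_nonneg : 0 ≤ A j s := hA j s ▸ nodalActuation_nonneg
      (fun e he => habar_nonneg e he s hs) (fun e he => haund_nonneg e he s hs) j
    positivity
  obtain rfl : g = fun t ρ qv => nodalField E ℓ abar aund f (fun j t => 2 / (ℓ * A j t))
      (fun j t => deriv (A j) t / A j t) (fun _ => qv) t ρ :=
    funext₃ fun t ρ qv => funext (hg t ρ qv)
  exact nodal_dynamics_sandwich_general hℓ habar_nonneg haund_nonneg hf_mono hgain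
    (fun s hs => hLip s hs (q s)) (fun s hs => (hρ₁ s hs).hasDerivWithinAt)
    (fun s hs => (hρ s hs).hasDerivWithinAt) (fun s hs => (hρ₂ s hs).hasDerivWithinAt) ht h0 hq
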